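/- Let 𝔤 be a finite-dimensional complex simple Lie algebra with root system Φ, base Δ, and let α ∈ Δ be a long simple root; set Σ_q := {α} ∪ N(α). Then every root β with n_α(β) = 2 satisfies Σ_{γ∈N(α)} n_γ(β) ≥ 3, and hence ht_{Σ_q}(β) ≥ 5; symmetrically, every root β with n_α(β) = −2 satisfies ht_{Σ_q}(β) ≤ −5. -/

import Mathlib

open scoped RealInnerProductSpace Classical

/-- Let `Φ` be the root system of a finite-dimensional complex simple Lie algebra
(an irreducible reduced crystallographic root system) with base `Δ`, and let `α ∈ Δ` be a
long simple root; set `Σ_q := {α} ∪ N(α)`.  Then every root `β` with `n_α(β) = 2`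
satisfies `Σ_{γ∈N(α)} n_γ(β) ≥ 3`, and hence `ht_{Σ_q}(β) ≥ 5`; symmetrically, every root
`β` with `n_α(β) = −2` satisfies `ht_{Σ_q}(β) ≤ −5`. -/
theorem coefficient_two_roots_have_large_q_height
    {E : Type*} [NormedAddCommGroup E] [InnerProductSpace ℝ E]
    (Φ : Finset E)
    (hΦ0 : (0 : E) ∉ Φ)
    (hspan : Submodule.span ℝ (Φ : Set E) = ⊤)
    (hrefl : ∀ α ∈ Φ, ∀ β ∈ Φ, β - (2 * ⟪β, α⟫ / ⟪α, α⟫) • α ∈ Φ)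
    (hcrys : ∀ α ∈ Φ, ∀ β ∈ Φ, ∃ m : ℤ, 2 * ⟪β, α⟫ / ⟪α, α⟫ = (m : ℝ))
    (hred : ∀ α ∈ Φ, ∀ t : ℝ, t • α ∈ Φ → t = 1 ∨ t = -1)
    (hirr : ∀ S : Set E,
      (∀ β ∈ Φ, ∀ γ ∈ Φ, β ∈ S → ⟪β, γ⟫ ≠ 0 → γ ∈ S) →
      (∃ β ∈ Φ, β ∈ S) → ∀ β ∈ Φ, β ∈ S)
    (Δ : Finset E) (hΔΦ : (Δ : Set E) ⊆ (Φ : Set E))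
    (hΔli : LinearIndependent ℝ (fun γ : Δ => (γ : E)))
    (n : E → E → ℤ)
    (hn : ∀ β ∈ Φ, β = ∑ γ ∈ Δ, (n β γ : ℝ) • γ)
    (hsign : ∀ β ∈ Φ, (∀ γ ∈ Δ, 0 ≤ n β γ) ∨ (∀ γ ∈ Δ, n β γ ≤ 0))
    (α : E) (hαΔ : α ∈ Δ)
    (hlong : ∀ γ ∈ Φ, ⟪γ, γ⟫ ≤ ⟪α, α⟫)
    (Nbr : Finset E) (hNbr : Nbr = Δ.filter fun γ => γ ≠ α ∧ ⟪γ, α⟫ ≠ 0)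
    (Sq : Finset E) (hSq : Sq = insert α Nbr)
    (htq : E → ℤ) (hhtq : ∀ β, htq β = ∑ γ ∈ Sq, n β γ) :
    (∀ β ∈ Φ, n β α = 2 → (3 ≤ ∑ γ ∈ Nbr, n β γ) ∧ 5 ≤ htq β) ∧
    (∀ β ∈ Φ, n β α = -2 → htq β ≤ -5) := by
  have hli : ∀ c : E → ℝ, ∑ γ ∈ Δ, c γ • γ = 0 → ∀ γ ∈ Δ, c γ = 0 := by
    intro c hc γ hγ
    have h1 := Fintype.linearIndependent_iff.1 hΔli (fun x => c x)
      (by rw [← hc]; exact Finset.sum_coe_sort Δ (fun x => c x • x)) ⟨γ, hγ⟩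
    exact h1
  have hαΦ : α ∈ Φ := hΔΦ hαΔ
  have hα0 : α ≠ 0 := fun h => hΦ0 (h ▸ hαΦ)
  have hapos : 0 < ⟪α, α⟫ := real_inner_self_pos.2 hα0
  -- pairing upper bound
  have hub : ∀ β ∈ Φ, β ≠ α → 2 * ⟪β, α⟫ ≤ ⟪α, α⟫ := by
    intro β hβ hne
    obtain ⟨m, hm⟩ := hcrys α hαΦ β hβ
    rw [div_eq_iff hapos.ne'] at hm
    have hpos : 0 < ⟪β - α, β - α⟫ := real_inner_self_pos.2 (sub_ne_zero.2 hne)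
    rw [real_inner_sub_sub_self] at hpos
    have hl := hlong β hβ
    have : m < 2 := by
      by_contra! h
      have h' : (2 : ℝ) ≤ m := by exact_mod_cast h
      nlinarith
    have h' : (m : ℝ) ≤ 1 := by exact_mod_cast (by omega : m ≤ 1)
    nlinarith
  have hneg : ∀ β ∈ Φ, -β ∈ Φ := by
    intro β hβ
    have hβ0 : β ≠ 0 := fun h => hΦ0 (h ▸ hβ)
    have h := hrefl β hβ β hβ
    have hp : 0 < ⟪β, β⟫ := real_inner_self_pos.2 hβ0
    rw [mul_div_assoc, div_self hp.ne', mul_one, two_smul] at h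
    simpa using h
  have hlb : ∀ β ∈ Φ, β ≠ -α → -⟪α, α⟫ ≤ 2 * ⟪β, α⟫ := by
    intro β hβ hne
    have h := hub (-β) (hneg β hβ) (fun h => hne (by rw [← h, neg_neg]))
    rw [inner_neg_left] at h
    linarith
  -- coefficient of multiples of α
  have hmul : ∀ β ∈ Φ, ∀ t : ℝ, β = t • α → (n β α : ℝ) = t := by
    intro β hβ t ht
    have h := hli (fun γ => (n β γ : ℝ) - if γ = α then t else 0) (by
      simp only [sub_smul, Finset.sum_sub_distrib, ite_smul, zero_smul]
      rw [← hn β hβ, Finset.sum_ite_eq' Δ α, if_pos hαΔ, ht, sub_self]) α hαΔ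
    simp at h
    linarith
  have hΔneg : ∀ γ ∈ Δ, γ ≠ α → γ ≠ -α := by
    intro γ hγ hne hγα
    have h := hli (fun x => (if x = γ then 1 else 0) + if x = α then 1 else 0) (by
      simp only [add_smul, Finset.sum_add_distrib, ite_smul, zero_smul, one_smul]
      rw [Finset.sum_ite_eq' Δ γ, Finset.sum_ite_eq' Δ α, if_pos hαΔ, if_pos hγ, hγα]
      simp) α hαΔ
    simp [hne.symm] at h
  have hαN : α ∉ Nbr := by simp [hNbr]
  have hexp : ∀ β ∈ Φ, ⟪β, α⟫ = n β α * ⟪α, α⟫ + ∑ γ ∈ Nbr, (n β γ : ℝ) * ⟪γ, α⟫ := by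
    intro β hβ
    have h1 : ⟪β, α⟫ = ∑ γ ∈ Δ, (n β γ : ℝ) * ⟪γ, α⟫ := by
      conv_lhs => rw [hn β hβ]
      simp only [sum_inner, real_inner_smul_left]
    rw [h1, ← Finset.sum_insert (f := fun γ => (n β γ : ℝ) * ⟪γ, α⟫) hαN]
    symm
    apply Finset.sum_subset
    · intro x hx
      rcases Finset.mem_insert.1 hx with rfl | hx
      · exact hαΔ
      · rw [hNbr] at hx
        exact (Finset.mem_filter.1 hx).1
    · intro x hx hx'
      have : ⟪x, α⟫ = 0 := by
        by_contra h0
        apply hx'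
        by_cases hxa : x = α
        · simp [hxa]
        · rw [hNbr]
          simp [hx, hxa, h0]
      rw [this, mul_zero]
  have hkey : ∀ β ∈ Φ, n β α = 2 → 3 ≤ ∑ γ ∈ Nbr, n β γ := by
    intro β hβ h2
    have hnn : ∀ γ ∈ Δ, 0 ≤ n β γ := by
      rcases hsign β hβ with h | h
      · exact h
      · have := h α hαΔ
        omega
    have hne : β ≠ α := by
      intro h
      have := hmul β hβ 1 (by rw [one_smul, h])
      rw [h2] at this
      norm_num at this
    have h1 := hub β hβ hne
    have h3 := hexp β hβ
    have h4 : ∑ γ ∈ Nbr, (n β γ : ℝ) * (-⟪α, α⟫) ≤ ∑ γ ∈ Nbr, (n β γ : ℝ) * (2 * ⟪γ, α⟫) := by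
      apply Finset.sum_le_sum
      intro γ hγ
      rw [hNbr, Finset.mem_filter] at hγ
      exact mul_le_mul_of_nonneg_left (hlb γ (hΔΦ hγ.1) (hΔneg γ hγ.1 hγ.2.1))
        (by exact_mod_cast hnn γ hγ.1)
    have h5 : ∑ γ ∈ Nbr, (n β γ : ℝ) * (2 * ⟪γ, α⟫)
        = 2 * ∑ γ ∈ Nbr, (n β γ : ℝ) * ⟪γ, α⟫ := by
      rw [Finset.mul_sum]
      exact Finset.sum_congr rfl fun _ _ => by ring
    rw [← Finset.sum_mul, h5] at h4
    rw [h2] at h3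
    push_cast at h3
    have h6 : (3 : ℝ) ≤ ∑ γ ∈ Nbr, (n β γ : ℝ) := by
      by_contra! h
      nlinarith
    exact_mod_cast h6
  have hht : ∀ β, htq β = n β α + ∑ γ ∈ Nbr, n β γ := by
    intro β
    rw [hhtq, hSq, Finset.sum_insert hαN]
  have hnneg : ∀ β ∈ Φ, ∀ γ ∈ Δ, n (-β) γ = - n β γ := by
    intro β hβ γ hγ
    have h := hli (fun γ => (n (-β) γ : ℝ) + n β γ) (by
      simp only [add_smul, Finset.sum_add_distrib]
      rw [← hn β hβ, ← hn (-β) (hneg β hβ), neg_add_cancel]) γ hγ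
    have h' : n (-β) γ + n β γ = 0 := by exact_mod_cast h
    omega
  refine ⟨fun β hβ h2 => ⟨hkey β hβ h2, ?_⟩, fun β hβ h2 => ?_⟩
  · have := hkey β hβ h2
    rw [hht]
    omega
  · have h := hkey (-β) (hneg β hβ) (by rw [hnneg β hβ α hαΔ, h2]; rfl)
    rw [Finset.sum_congr rfl (g := fun γ => - n β γ) (fun γ hγ => hnneg β hβ γ (by
      rw [hNbr, Finset.mem_filter] at hγ
      exact hγ.1)), Finset.sum_neg_distrib] at h
    rw [hht]
    omega
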